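/- arXiv:1909.03327 — 2 statements merged into one kernel-verified Lean document; each statement's English description precedes it below -/
import Mathlib

section
/- Let u* = (−33 + √1053)/4 and let β₄(u) = (1 − 2η(u))u + (2/3)u²(4 + η(u)) with η(u) = −6u/(3 + 2u), defined for u ≠ −3/2. Then β₄ is differentiable at u* and −β₄′(u*) lies in the open interval (1.08, 1.10). -/
/-- Anomalous dimension in the LPA of the quartic matrix-model FRG flow. -/
noncomputable def etaLPA (u : ℝ) : ℝ := -6 * u / (3 + 2 * u)

/-- Quartic beta function at truncation order `k = 6`. -/
noncomputable def beta4LPA (u : ℝ) : ℝ :=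
  (1 - 2 * etaLPA u) * u + (2 / 3) * u ^ 2 * (4 + etaLPA u)

/-! Over the common denominator, `β₄(u) = u (4u² + 66u + 9) / (3 (3 + 2u))`, so the nontrivial fixed
points are the roots of `4u² + 66u + 9`. Reducing `β₄'` modulo this quadratic leaves a linear
function of `u`: the critical exponent of such a fixed point is `1 - 2u/3`, which is
`(39 - √1053) / 6` at `u*`. -/

theorem beta4LPA_eq_div {u : ℝ} (hd : 3 + 2 * u ≠ 0) :
    beta4LPA u = u * (4 * u ^ 2 + 66 * u + 9) / (3 * (3 + 2 * u)) := by
  rw [beta4LPA, etaLPA]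
  field_simp
  ring

theorem beta4LPA_eq_zero_iff {u : ℝ} (hu : u ≠ 0) (hd : 3 + 2 * u ≠ 0) :
    beta4LPA u = 0 ↔ 4 * u ^ 2 + 66 * u + 9 = 0 := by
  simp [beta4LPA_eq_div hd, hu, hd]

theorem hasDerivAt_beta4LPA {u : ℝ} (hd : 3 + 2 * u ≠ 0) :
    HasDerivAt beta4LPA
      ((16 * u ^ 3 + 168 * u ^ 2 + 396 * u + 27) / (3 * (3 + 2 * u) ^ 2)) u := by
  have hnum : HasDerivAt (fun x : ℝ ↦ x * (4 * x ^ 2 + 66 * x + 9))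
      (12 * u ^ 2 + 132 * u + 9) u := by
    have hquad := (((hasDerivAt_pow 2 u).const_mul 4).add
      ((hasDerivAt_id' u).const_mul 66)).add_const 9
    refine ((hasDerivAt_id' u).mul hquad).congr_deriv ?_
    simp only [Pi.add_apply]
    ring
  have hden : HasDerivAt (fun x : ℝ ↦ 3 * (3 + 2 * x)) 6 u :=
    ((((hasDerivAt_id' u).const_mul 2).const_add 3).const_mul 3).congr_deriv (by norm_num)
  have heq : beta4LPA =ᶠ[nhds u]
      fun x ↦ x * (4 * x ^ 2 + 66 * x + 9) / (3 * (3 + 2 * x)) := by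
    have hcont : ContinuousAt (fun x : ℝ ↦ 3 + 2 * x) u := by fun_prop
    filter_upwards [hcont.eventually_ne hd] with x hx using beta4LPA_eq_div hx
  refine ((hnum.div hden (mul_ne_zero three_ne_zero hd)).congr_of_eventuallyEq heq).congr_deriv ?_
  field_simp
  ring

theorem hasDerivAt_beta4LPA_of_eq_zero {u : ℝ} (hu : u ≠ 0) (hd : 3 + 2 * u ≠ 0)
    (hβ : beta4LPA u = 0) : HasDerivAt beta4LPA (2 * u / 3 - 1) u := by
  have hquad : 4 * u ^ 2 + 66 * u + 9 = 0 := (beta4LPA_eq_zero_iff hu hd).1 hβ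
  refine (hasDerivAt_beta4LPA hd).congr_deriv ?_
  rw [div_eq_iff (by positivity)]
  linear_combination (2 * u + 6) * hquad

theorem sqrt_1053_mem_Ioo : Real.sqrt 1053 ∈ Set.Ioo (32.4 : ℝ) 32.52 :=
  ⟨Real.lt_sqrt_of_sq_lt (by norm_num), (Real.sqrt_lt' (by norm_num)).2 (by norm_num)⟩

/-- At the nontrivial fixed point `u* = (-33 + √1053)/4`, the beta function `β₄` is
differentiable and the critical exponent `θ = -β₄'(u*)` is approximately `1.09`. -/
theorem critical_exponent_at_fixed_point :
    DifferentiableAt ℝ beta4LPA ((-33 + Real.sqrt 1053) / 4) ∧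
    -deriv beta4LPA ((-33 + Real.sqrt 1053) / 4) ∈ Set.Ioo (1.08 : ℝ) 1.10 := by
  obtain ⟨hlo, hhi⟩ := sqrt_1053_mem_Ioo
  set u : ℝ := (-33 + Real.sqrt 1053) / 4 with hu_def
  have hu : u ≠ 0 := (show u < 0 by linarith).ne
  have hd : 3 + 2 * u ≠ 0 := (show 0 < 3 + 2 * u by linarith).ne'
  have hβ : beta4LPA u = 0 := by
    rw [beta4LPA_eq_zero_iff hu hd, hu_def]
    linear_combination Real.sq_sqrt (show (0 : ℝ) ≤ 1053 by norm_num) / 4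
  have hderiv : HasDerivAt beta4LPA (2 * u / 3 - 1) u := hasDerivAt_beta4LPA_of_eq_zero hu hd hβ
  refine ⟨hderiv.differentiableAt, ?_⟩
  rw [hderiv.deriv]
  constructor <;> linarith
end

section
/- Define η(u) = −6u/(3 + 2u), β₄(u, w) = (1 − 2η(u))u + (2/3)u²(4 + η(u)) − 4w(1 + η(u)/3), and β₆(u, w) = (2 − 3η(u) + 2u(4 + η(u)))w − 3u³(1 + η(u)/5), for real u with 3 + 2u ≠ 0 and real w. Then there exist real numbers u ∈ (−0.21, −0.19) and w ∈ (0.01, 0.03) with β₄(u, w) = 0 and β₆(u, w) = 0. -/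
/-- Quartic beta function at truncation order `k = 8`. -/
noncomputable def beta4 (u w : ℝ) : ℝ :=
  (1 - 2 * etaLPA u) * u + (2 / 3) * u ^ 2 * (4 + etaLPA u) - 4 * w * (1 + etaLPA u / 3)

/-- Sextic beta function at truncation order `k = 8`. -/
noncomputable def beta6 (u w : ℝ) : ℝ :=
  (2 - 3 * etaLPA u + 2 * u * (4 + etaLPA u)) * w - 3 * u ^ 3 * (1 + etaLPA u / 5)

/-!
Away from the pole of `etaLPA`, the equation `beta4 u w = 0` is linear in `w` and has exactly one
solution, a cubic in `u`. Along this nullcline `beta6` is, up to the denominator `3 + 2 * u`, the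
product of `u`, which accounts for the Gaussian fixed point, and a quartic in `u`. The quartic
changes sign between `-0.21` and `-0.19`, and the cubic is decreasing there, so its values at the
two endpoints bound `w`.
-/

/-- The sextic coupling `w` solving `beta4 u w = 0` for a given quartic coupling `u`. -/
noncomputable def beta4Nullcline (u : ℝ) : ℝ := u / 4 + 11 * u ^ 2 / 6 + u ^ 3 / 9

/-- The polynomial whose roots, away from the pole of `etaLPA`, are the quartic couplings of the
non-Gaussian fixed points. -/
noncomputable def fixedPointPoly (u : ℝ) : ℝ :=
  3 / 2 + 45 / 2 * u + 77 * u ^ 2 + 452 / 45 * u ^ 3 + 4 / 9 * u ^ 4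

theorem beta4_eq {u : ℝ} (hu : 3 + 2 * u ≠ 0) (w : ℝ) :
    beta4 u w = 12 / (3 + 2 * u) * (beta4Nullcline u - w) := by
  unfold beta4 etaLPA beta4Nullcline
  field_simp
  ring

theorem beta4_eq_zero_iff {u : ℝ} (hu : 3 + 2 * u ≠ 0) (w : ℝ) :
    beta4 u w = 0 ↔ w = beta4Nullcline u := by
  have hcoeff : 12 / (3 + 2 * u) ≠ 0 := div_ne_zero (by norm_num) hu
  rw [beta4_eq hu, mul_eq_zero_iff_left hcoeff, sub_eq_zero, eq_comm]

theorem beta6_eq {u : ℝ} (hu : 3 + 2 * u ≠ 0) (w : ℝ) :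
    beta6 u w =
      ((6 + 46 * u + 4 * u ^ 2) * w - 3 * u ^ 3 * (3 + 4 / 5 * u)) / (3 + 2 * u) := by
  unfold beta6 etaLPA
  field_simp
  ring

theorem beta6_beta4Nullcline {u : ℝ} (hu : 3 + 2 * u ≠ 0) :
    beta6 u (beta4Nullcline u) = u * fixedPointPoly u / (3 + 2 * u) := by
  rw [beta6_eq hu, beta4Nullcline, fixedPointPoly]
  ring

theorem beta4_eq_zero_and_beta6_eq_zero_iff {u : ℝ} (hu : 3 + 2 * u ≠ 0) (w : ℝ) :
    beta4 u w = 0 ∧ beta6 u w = 0 ↔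
      w = beta4Nullcline u ∧ (u = 0 ∨ fixedPointPoly u = 0) := by
  rw [beta4_eq_zero_iff hu]
  refine and_congr_right fun hw ↦ ?_
  rw [hw, beta6_beta4Nullcline hu, div_eq_zero_iff, or_iff_left hu, mul_eq_zero]

theorem exists_fixedPointPoly_eq_zero :
    ∃ u ∈ Set.Ioo (-0.21 : ℝ) (-0.19), fixedPointPoly u = 0 := by
  have hcont : Continuous fixedPointPoly := by
    unfold fixedPointPoly
    fun_prop
  have hleft : 0 < fixedPointPoly (-0.21) := by norm_num [fixedPointPoly]
  have hright : fixedPointPoly (-0.19) < 0 := by norm_num [fixedPointPoly]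
  exact intermediate_value_Ioo' (by norm_num) hcont.continuousOn ⟨hright, hleft⟩

theorem beta4Nullcline_sub (u v : ℝ) :
    beta4Nullcline u - beta4Nullcline v =
      (u - v) * (1 / 4 + 11 / 6 * (u + v) + (u ^ 2 + u * v + v ^ 2) / 9) := by
  unfold beta4Nullcline
  ring

theorem strictAntiOn_beta4Nullcline :
    StrictAntiOn beta4Nullcline (Set.Icc (-10) (-1 / 10)) := by
  intro u hu v hv huv
  have sq_le_chord (x : ℝ) (hx : x ∈ Set.Icc (-10) (-1 / 10)) :
      x ^ 2 ≤ -(101 / 10) * x - 1 := by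
    have hprod : (x - -10) * (x - -1 / 10) ≤ 0 :=
      mul_nonpos_of_nonneg_of_nonpos (sub_nonneg.mpr hx.1) (sub_nonpos.mpr hx.2)
    linarith
  have hmul : 2 * u * v ≤ u ^ 2 + v ^ 2 := two_mul_le_add_sq u v
  have hslope : 1 / 4 + 11 / 6 * (v + u) + (v ^ 2 + v * u + u ^ 2) / 9 < 0 := by
    linarith [sq_le_chord u hu, sq_le_chord v hv, hu.2, hv.2]
  rw [← sub_neg, beta4Nullcline_sub]
  exact mul_neg_of_pos_of_neg (sub_pos.mpr huv) hslope

theorem beta4Nullcline_mem_Ioo {u : ℝ} (hu : u ∈ Set.Ioo (-0.21 : ℝ) (-0.19)) :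
    beta4Nullcline u ∈ Set.Ioo (0.01 : ℝ) 0.03 := by
  have hsub : Set.Icc (-0.21 : ℝ) (-0.19) ⊆ Set.Icc (-10) (-1 / 10) :=
    Set.Icc_subset_Icc (by norm_num) (by norm_num)
  have hmem : beta4Nullcline u ∈ Set.Ioo (beta4Nullcline (-0.19)) (beta4Nullcline (-0.21)) :=
    (strictAntiOn_beta4Nullcline.mono hsub).mapsTo_Ioo hu
  exact Set.Ioo_subset_Ioo (by norm_num [beta4Nullcline]) (by norm_num [beta4Nullcline]) hmem

/-- Existence of the fixed point `p₁ ≈ (-0.20, 0.02)` of the `k = 8` LPA truncation. -/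
theorem fixed_point_p1 :
    ∃ u w : ℝ, u ∈ Set.Ioo (-0.21 : ℝ) (-0.19) ∧ w ∈ Set.Ioo (0.01 : ℝ) 0.03 ∧
      3 + 2 * u ≠ 0 ∧ beta4 u w = 0 ∧ beta6 u w = 0 := by
  obtain ⟨u, hu, hroot⟩ := exists_fixedPointPoly_eq_zero
  have hpole : 3 + 2 * u ≠ 0 := by linarith [hu.1]
  exact ⟨u, beta4Nullcline u, hu, beta4Nullcline_mem_Ioo hu, hpole,
    (beta4_eq_zero_and_beta6_eq_zero_iff hpole _).mpr ⟨rfl, Or.inr hroot⟩⟩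
end
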